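/- Let P = c_P z₁^{α₁}z₂^{α₂}z₃^{α₃}, Q = c_Q z₁^{β₁}z₂^{β₂}z₃^{β₃}, R = c_R z₁^{γ₁}z₂^{γ₂}z₃^{γ₃} be monomials with nonzero coefficients c_P, c_Q, c_R ∈ ℂ, with deg P + deg Q = 2·deg R, deg R ≥ 2, and det[[α₁,β₁,γ₁],[α₂,β₂,γ₂],[α₃,β₃,γ₃]] ≠ 0 (holomorphic nondegeneracy); set d = deg P + deg Q. Then dim_ℝ g₁ = 1. -/

import Mathlib

open MvPolynomial Complex

noncomputable section

/-- `Φ(z) = P(z)·conj(Q(z)) + Q(z)·conj(P(z)) + R(z)·conj(R(z))`, so that the model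
hypersurface is `M = {(z,w) : Im w = Φ(z)}`. -/
def Phi (P Q R : MvPolynomial (Fin 3) ℂ) (z : Fin 3 → ℂ) : ℂ :=
  eval z P * (starRingEnd ℂ) (eval z Q) + eval z Q * (starRingEnd ℂ) (eval z P) +
    eval z R * (starRingEnd ℂ) (eval z R)

/-- `Φ_j(z) = (∂P/∂z_j)(z)·conj(Q(z)) + (∂Q/∂z_j)(z)·conj(P(z)) + (∂R/∂z_j)(z)·conj(R(z))`. -/
def PhiD (P Q R : MvPolynomial (Fin 3) ℂ) (j : Fin 3) (z : Fin 3 → ℂ) : ℂ :=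
  eval z (pderiv j P) * (starRingEnd ℂ) (eval z Q) +
    eval z (pderiv j Q) * (starRingEnd ℂ) (eval z P) +
    eval z (pderiv j R) * (starRingEnd ℂ) (eval z R)

/-- The monomial `c·z₁^{e₁} z₂^{e₂} z₃^{e₃}`. -/
def mon (c : ℂ) (e : Fin 3 → ℕ) : MvPolynomial (Fin 3) ℂ :=
  C c * X 0 ^ e 0 * X 1 ^ e 1 * X 2 ^ e 2

/-- Total degree of the exponent vector `e`. -/
def degE (e : Fin 3 → ℕ) : ℕ := e 0 + e 1 + e 2

/-- The determinant of the 3×3 matrix whose columns are the exponent vectors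
`a`, `b`, `g` of the three monomials. -/
def edet (a b g : Fin 3 → ℕ) : ℤ :=
  Matrix.det !![(a 0 : ℤ), (b 0 : ℤ), (g 0 : ℤ);
                (a 1 : ℤ), (b 1 : ℤ), (g 1 : ℤ);
                (a 2 : ℤ), (b 2 : ℤ), (g 2 : ℤ)]

/-- The polynomial vector field `Σ F_j ∂/∂z_j + G ∂/∂w` is an infinitesimal CR
automorphism of `M = {Im w = Φ(z)}`. -/
def IsInfCR (P Q R : MvPolynomial (Fin 3) ℂ)
    (F : Fin 3 → MvPolynomial (Fin 4) ℂ) (G : MvPolynomial (Fin 4) ℂ) : Prop :=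
  ∀ (z : Fin 3 → ℂ) (u : ℝ),
    (eval (Fin.snoc z ((u : ℂ) + Complex.I * Phi P Q R z)) G / (2 * Complex.I) -
      ∑ j, eval (Fin.snoc z ((u : ℂ) + Complex.I * Phi P Q R z)) (F j) * PhiD P Q R j z).re = 0

/-- The graded component `g_μ`: infinitesimal CR automorphisms of `M` all of whose
monomial terms have weight `μ` (each `z_j` having weight `1/d` and `w` weight `1`). -/
def gw (P Q R : MvPolynomial (Fin 3) ℂ) (d : ℕ) (μ : ℚ) :
    Set ((Fin 3 → MvPolynomial (Fin 4) ℂ) × MvPolynomial (Fin 4) ℂ) :=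
  {Xf | IsInfCR P Q R Xf.1 Xf.2 ∧
    (∀ j, ∀ m ∈ (Xf.1 j).support,
      ((m 0 : ℚ) + (m 1 : ℚ) + (m 2 : ℚ)) / (d : ℚ) + (m 3 : ℚ) - 1 / (d : ℚ) = μ) ∧
    ∀ m ∈ Xf.2.support,
      ((m 0 : ℚ) + (m 1 : ℚ) + (m 2 : ℚ)) / (d : ℚ) + (m 3 : ℚ) - 1 = μ}

local notation "conj" => starRingEnd ℂ

/-- The polynomial with conjugated coefficients. -/
def conjPoly (p : MvPolynomial (Fin 3) ℂ) : MvPolynomial (Fin 3) ℂ := map conj p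

lemma eval_conjPoly (p : MvPolynomial (Fin 3) ℂ) (z : Fin 3 → ℂ) :
    eval (fun i => conj (z i)) (conjPoly p) = conj (eval z p) := by
  rw [conjPoly, eval_map]
  exact (eval₂_comp_left conj (RingHom.id ℂ) z p).symm

lemma conjPoly_zero : conjPoly 0 = 0 := map_zero _

lemma constantCoeff_conjPoly (p : MvPolynomial (Fin 3) ℂ) :
    constantCoeff (conjPoly p) = conj (constantCoeff p) := by
  simp [conjPoly]

lemma eval_bind {ι τ : Type*} (s : ι → MvPolynomial τ ℂ) (x : τ → ℂ) (p : MvPolynomial ι ℂ) :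
    eval x (bind₁ s p) = eval (fun i => eval x (s i)) p :=
  eval₂Hom_bind₁ (RingHom.id ℂ) x s p

/-- A polynomial in `z` and `ζ` that vanishes on the totally real subspace `ζ = conj z` is zero. -/
lemma eq_zero_of_eval_conj {ι : Type*} [Finite ι] (T : MvPolynomial (ι ⊕ ι) ℂ)
    (h : ∀ z : ι → ℂ, eval (Sum.elim z fun i => conj (z i)) T = 0) : T = 0 := by
  set s : ι ⊕ ι → MvPolynomial (ι ⊕ ι) ℂ :=
    Sum.elim (fun i => X (.inl i) + C I * X (.inr i)) (fun i => X (.inl i) - C I * X (.inr i))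
    with hs
  have hS : bind₁ s T = 0 := by
    refine funext_set (fun _ => Set.range ((↑) : ℝ → ℂ))
      (fun _ => Set.infinite_range_of_injective Complex.ofReal_injective) fun x hx => ?_
    choose y hy using fun i => hx i (Set.mem_univ i)
    have := h fun i => y (.inl i) + I * y (.inr i)
    rw [map_zero, eval_bind, ← this]
    congr 2
    ext i
    rcases i with i | i <;> simp [hs, ← hy, sub_eq_add_neg]
  refine MvPolynomial.funext fun y => ?_
  have := congrArg (eval (Sum.elim (fun i => (y (.inl i) + y (.inr i)) / 2)
    (fun i => (y (.inl i) - y (.inr i)) / (2 * I)))) hS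
  rw [eval_bind, map_zero] at this
  rw [map_zero, ← this]
  congr 2
  ext i
  rcases i with i | i <;> simp [hs] <;> field_simp <;> ring

section Core

variable {m a b : Fin 3 → MvPolynomial (Fin 3) ℂ} {k h : MvPolynomial (Fin 3) ℂ}
  {σ : Equiv.Perm (Fin 3)} {e : Fin 3 → (Fin 3 →₀ ℕ)} {κ : Fin 3 → ℂ}

/-- If `Re (i k)` equals a Hermitian expression without pure terms, then `k = 0`. -/
lemma polarized_first (hm0 : ∀ i, constantCoeff (m i) = 0) (ha0 : ∀ i, constantCoeff (a i) = 0)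
    (hk0 : constantCoeff k = 0)
    (h1 : ∀ z, -(I / 2) * (eval z k - conj (eval z k)) =
      ∑ i, (eval z (a i) * conj (eval z (m (σ i))) + conj (eval z (a i)) * eval z (m (σ i)))) :
    k = 0 ∧ ∀ z ζ, ∑ i, (eval z (a i) * eval ζ (conjPoly (m (σ i))) +
      eval ζ (conjPoly (a i)) * eval z (m (σ i))) = 0 := by
  have hT : ∀ z ζ, -(I / 2) * (eval z k - eval ζ (conjPoly k)) -
      ∑ i, (eval z (a i) * eval ζ (conjPoly (m (σ i))) +
        eval ζ (conjPoly (a i)) * eval z (m (σ i))) = 0 := by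
    have := eq_zero_of_eval_conj (C (-(I / 2)) * (rename Sum.inl k - rename Sum.inr (conjPoly k)) -
      ∑ i, (rename Sum.inl (a i) * rename Sum.inr (conjPoly (m (σ i))) +
        rename Sum.inr (conjPoly (a i)) * rename Sum.inl (m (σ i)))) (fun z => by
          simpa [eval_rename, Function.comp_def, eval_conjPoly, sub_eq_zero] using h1 z)
    intro z ζ
    simpa [eval_rename, Function.comp_def] using congrArg (eval (Sum.elim z ζ)) this
  have hk : k = 0 := MvPolynomial.funext fun z => by
    simpa [constantCoeff_conjPoly, hm0, ha0, hk0] using hT z 0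
  refine ⟨hk, fun z ζ => ?_⟩
  simpa [hk, conjPoly] using hT z ζ

lemma polarized_second (hm0 : ∀ i, constantCoeff (m i) = 0) (hb0 : ∀ i, constantCoeff (b i) = 0)
    (hh0 : constantCoeff h = 0)
    (h2 : ∀ z, -(I / 2) * (eval z h - conj (eval z h)) =
      ∑ i, (eval z (b i) * conj (eval z (m (σ i))) + conj (eval z (b i)) * eval z (m (σ i))) +
      2 * I * (∑ i, eval z (m i) * conj (eval z (m (σ i)))) *
        ∑ i, eval z (a i) * conj (eval z (m (σ i)))) :
    h = 0 ∧ ∀ z ζ, ∑ i, (eval z (b i) * eval ζ (conjPoly (m (σ i))) +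
      eval ζ (conjPoly (b i)) * eval z (m (σ i))) +
      2 * I * (∑ i, eval z (m i) * eval ζ (conjPoly (m (σ i)))) *
        ∑ i, eval z (a i) * eval ζ (conjPoly (m (σ i))) = 0 := by
  have hT : ∀ z ζ, -(I / 2) * (eval z h - eval ζ (conjPoly h)) -
      (∑ i, (eval z (b i) * eval ζ (conjPoly (m (σ i))) +
        eval ζ (conjPoly (b i)) * eval z (m (σ i))) +
      2 * I * (∑ i, eval z (m i) * eval ζ (conjPoly (m (σ i)))) *
        ∑ i, eval z (a i) * eval ζ (conjPoly (m (σ i)))) = 0 := by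
    have := eq_zero_of_eval_conj (C (-(I / 2)) * (rename Sum.inl h - rename Sum.inr (conjPoly h)) -
      (∑ i, (rename Sum.inl (b i) * rename Sum.inr (conjPoly (m (σ i))) +
        rename Sum.inr (conjPoly (b i)) * rename Sum.inl (m (σ i))) +
      C (2 * I) * (∑ i, rename Sum.inl (m i) * rename Sum.inr (conjPoly (m (σ i)))) *
        ∑ i, rename Sum.inl (a i) * rename Sum.inr (conjPoly (m (σ i))))) (fun z => by
          simpa [eval_rename, Function.comp_def, eval_conjPoly, sub_eq_zero] using h2 z)
    intro z ζ
    simpa [eval_rename, Function.comp_def] using congrArg (eval (Sum.elim z ζ)) this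
  have hh : h = 0 := MvPolynomial.funext fun z => by
    simpa [constantCoeff_conjPoly, hm0, hb0, hh0] using hT z 0
  refine ⟨hh, fun z ζ => ?_⟩
  simpa only [hh, conjPoly, map_zero, sub_zero, mul_zero, zero_sub, neg_eq_zero] using hT z ζ

lemma coeff_sum_monomial (he : Function.Injective e) (c : Fin 3 → ℂ) (j : Fin 3) :
    coeff (e (σ j)) (∑ i, C (c i) * conjPoly (monomial (e (σ i)) (κ (σ i)))) =
      c j * conj (κ (σ j)) := by
  rw [coeff_sum, Finset.sum_eq_single j]
  · simp [conjPoly, coeff_monomial, coeff_C_mul]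
  · intro i _ hij
    simp [conjPoly, coeff_C_mul, coeff_monomial, he.eq_iff, hij]
  · simp

/-- Comparing coefficients in the conjugate variable forces all the components to vanish. -/
lemma components_eq_zero (hm : ∀ i, m i = monomial (e i) (κ i)) (hκ : ∀ i, κ i ≠ 0)
    (he : Function.Injective e) (he2 : ∀ i j l, e i + e j ≠ e l)
    (hb : ∀ i j, coeff (e j) (b i) = 0)
    (h2 : ∀ z ζ, ∑ i, (eval z (b i) * eval ζ (conjPoly (m (σ i))) +
      eval ζ (conjPoly (b i)) * eval z (m (σ i))) +
      2 * I * (∑ i, eval z (m i) * eval ζ (conjPoly (m (σ i)))) *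
        ∑ i, eval z (a i) * eval ζ (conjPoly (m (σ i))) = 0) :
    (∀ i, a i = 0) ∧ ∀ i, b i = 0 := by
  have hT : ∀ z, ∑ i, C (eval z (b i)) * conjPoly (m (σ i)) +
      ∑ i, C (eval z (m (σ i))) * conjPoly (b i) +
      C (2 * I) * ((∑ i, C (eval z (m i)) * conjPoly (m (σ i))) *
        ∑ i, C (eval z (a i)) * conjPoly (m (σ i))) = 0 := fun z => by
    refine MvPolynomial.funext fun ζ => ?_
    have := h2 z ζ
    rw [Finset.sum_add_distrib] at this
    simpa [mul_assoc, mul_comm (eval z (m (σ _)))] using this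
  have hκ' : ∀ i, conj (κ i) ≠ 0 := fun i => by simpa using hκ i
  have hb0 : ∀ j, b j = 0 := fun j => MvPolynomial.funext fun z => by
    have := congrArg (coeff (e (σ j))) (hT z)
    have hq : coeff (e (σ j)) ((∑ i, C (eval z (m i)) * conjPoly (m (σ i))) *
        ∑ i, C (eval z (a i)) * conjPoly (m (σ i))) = 0 := by
      simp only [hm, Finset.sum_mul_sum, conjPoly, map_monomial, C_mul_monomial, monomial_mul,
        coeff_sum, coeff_monomial, he2, if_false, Finset.sum_const_zero]
    have hl : coeff (e (σ j)) (∑ i, C (eval z (m (σ i))) * conjPoly (b i)) = 0 := by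
      simp [coeff_sum, coeff_C_mul, conjPoly, coeff_map, hb]
    rw [coeff_add, coeff_add, coeff_C_mul, hq, hl] at this
    simp only [hm, coeff_sum_monomial he] at this
    simpa [hκ'] using this
  refine ⟨fun j => ?_, hb0⟩
  have hm0 : m 0 ≠ 0 := by simpa [hm] using hκ 0
  refine (mul_eq_zero.mp (?_ : m 0 * a j = 0)).resolve_left hm0
  refine MvPolynomial.funext fun z => ?_
  have := hT z
  simp only [hb0, conjPoly_zero, map_zero, zero_mul, mul_zero, Finset.sum_const_zero, zero_add,
    mul_eq_zero, C_eq_zero, I_ne_zero, OfNat.ofNat_ne_zero, or_false, false_or] at this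
  rw [map_mul, map_zero, mul_eq_zero]
  rcases this with h | h
  · have := congrArg (coeff (e (σ 0))) h
    simp only [hm, coeff_sum_monomial he] at this
    rw [hm]
    exact .inl (by simpa [hκ'] using this)
  · have := congrArg (coeff (e (σ j))) h
    simp only [hm, coeff_sum_monomial he] at this
    exact .inr (by simpa [hκ'] using this)

end Core

section Decomposition

/-- The exponents of `z` in an exponent vector of `(z, w)`. -/
def baseExp (n : Fin 4 →₀ ℕ) : Fin 3 →₀ ℕ := Finsupp.equivFunOnFinite.symm fun i => n i.castSucc

lemma rename_monomial_baseExp (n : Fin 4 →₀ ℕ) (c : ℂ) :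
    rename Fin.castSucc (monomial (baseExp n) c) * X 3 ^ n 3 = monomial n c := by
  rw [rename_monomial, X_pow_eq_monomial, monomial_mul, mul_one]
  congr 2
  refine Finsupp.ext fun i => ?_
  rw [Finsupp.add_apply]
  refine Fin.lastCases ?_ (fun i => ?_) i
  · rw [Finsupp.mapDomain_of_notMem_range]
    · simp [show (3 : Fin 4) = Fin.last 3 from rfl]
    · rintro ⟨x, hx⟩
      exact (Fin.castSucc_lt_last x).ne hx
  · rw [Finsupp.mapDomain_apply (Fin.castSucc_injective 3), Finsupp.single_apply,
      if_neg (fun h => (Fin.castSucc_lt_last i).ne h.symm)]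
    simp [baseExp]

/-- A weighted homogeneous polynomial in `(z, w)` of degree less than `3` in `w`, written out in
powers of `w`. -/
lemma exists_decomposition {d N : ℕ} (hN : N < d * 3) (p : MvPolynomial (Fin 4) ℂ)
    (hp : ∀ n ∈ p.support, n 0 + n 1 + n 2 + d * n 3 = N) :
    ∃ q : Fin 3 → MvPolynomial (Fin 3) ℂ,
      (∀ k : Fin 3, ∀ r, r + d * k = N → (q k).IsHomogeneous r) ∧
      (∀ k : Fin 3, N < d * k → q k = 0) ∧
      p = ∑ k : Fin 3, rename Fin.castSucc (q k) * X 3 ^ (k : ℕ) := by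
  refine ⟨fun k => ∑ n ∈ p.support with n 3 = (k : ℕ), monomial (baseExp n) (coeff n p), ?_, ?_, ?_⟩
  · intro k r hr
    refine IsHomogeneous.sum _ _ _ fun n hn => isHomogeneous_monomial _ ?_
    obtain ⟨hn, hk⟩ := Finset.mem_filter.mp hn
    have h := hp n hn
    rw [hk] at h
    rw [Finsupp.degree_eq_sum]
    simp only [baseExp, Finsupp.equivFunOnFinite_symm_apply_apply, Fin.sum_univ_three]
    change n 0 + n 1 + n 2 = r
    omega
  · intro k hk
    refine Finset.sum_eq_zero fun n hn => ?_
    obtain ⟨hn, hk'⟩ := Finset.mem_filter.mp hn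
    have h := hp n hn
    rw [hk'] at h
    omega
  · have hlt : ∀ n ∈ p.support, n 3 < 3 := fun n hn => by
      have h := hp n hn
      by_contra! h3
      have := Nat.mul_le_mul_left d h3
      omega
    have h1 : ∀ k : Fin 3, rename Fin.castSucc
        (∑ n ∈ p.support with n 3 = (k : ℕ), monomial (baseExp n) (coeff n p)) * X 3 ^ (k : ℕ) =
        ∑ n ∈ p.support with n 3 = (k : ℕ), monomial n (coeff n p) := fun k => by
      rw [map_sum, Finset.sum_mul]
      refine Finset.sum_congr rfl fun n hn => ?_
      rw [← (Finset.mem_filter.mp hn).2, rename_monomial_baseExp]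
    simp only [h1]
    rw [Fin.sum_univ_eq_sum_range
      (fun k => ∑ n ∈ p.support with n 3 = (k : ℕ), monomial n (coeff n p)) 3,
      Finset.sum_fiberwise_of_maps_to (fun n hn => Finset.mem_range.mpr (hlt n hn))]
    exact p.as_sum

lemma eval_snoc_rename (z : Fin 3 → ℂ) (w : ℂ) (q : MvPolynomial (Fin 3) ℂ) :
    eval (Fin.snoc z w : Fin 4 → ℂ) (rename Fin.castSucc q) = eval z q := by
  rw [eval_rename]
  congr 2
  ext i
  simp

lemma eval_snoc_X (z : Fin 3 → ℂ) (w : ℂ) :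
    eval (Fin.snoc z w : Fin 4 → ℂ) (X 3) = w := by
  rw [eval_X]
  exact Fin.snoc_last (α := fun _ => ℂ) w z

end Decomposition

section Exponents

variable {e : Fin 3 → (Fin 3 →₀ ℕ)} {κ : Fin 3 → ℂ}

/-- The matrix whose rows are the exponent vectors. -/
def expMatrix (e : Fin 3 → (Fin 3 →₀ ℕ)) : Matrix (Fin 3) (Fin 3) ℂ :=
  Matrix.of fun i j => (e i j : ℂ)

lemma eq_zero_of_sum_exponents (hdet : (expMatrix e).det ≠ 0) (x : Fin 3 → ℂ)
    (hx : ∀ j, ∑ i, x i * e i j = 0) : x = 0 :=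
  Matrix.eq_zero_of_vecMul_eq_zero hdet (funext hx)

lemma exponents_injective (hdet : (expMatrix e).det ≠ 0) : Function.Injective e := by
  intro i j hij
  have := eq_zero_of_sum_exponents hdet (Pi.single i 1 - Pi.single j 1) fun l => by
    simp [sub_mul, Finset.sum_sub_distrib, Pi.single_apply, hij]
  by_contra hne
  simpa [hne] using congrFun this i

lemma exponents_add_ne (hdet : (expMatrix e).det ≠ 0) (i j l : Fin 3) : e i + e j ≠ e l := by
  intro hij
  have := eq_zero_of_sum_exponents hdet (Pi.single i 1 + Pi.single j 1 - Pi.single l 1) fun k => by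
    simp [sub_mul, add_mul, Finset.sum_sub_distrib, Finset.sum_add_distrib, Pi.single_apply, ← hij]
  simpa [Finset.sum_sub_distrib, Finset.sum_add_distrib] using
    congrArg (fun x : Fin 3 → ℂ => ∑ i, x i) this

lemma eval_pderiv_monomial (n : Fin 3 →₀ ℕ) (c : ℂ) (j : Fin 3) (z : Fin 3 → ℂ) :
    z j * eval z (pderiv j (monomial n c)) = n j * eval z (monomial n c) := by
  simpa only [map_mul, eval_X, map_nsmul, nsmul_eq_mul, map_natCast] using
    congrArg (eval z) (X_mul_pderiv_monomial (i := j) (m := n) (r := c))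

/-- A vector field for which all three monomials are eigenvectors with the same eigenvalue is a
multiple of the diagonal one. -/
lemma eq_diagonal (hdet : (expMatrix e).det ≠ 0) (hκ : ∀ i, κ i ≠ 0)
    {t : Fin 3 → ℂ} (ht : ∀ i, ∑ j, (e i j : ℂ) * t j = 1)
    {v : Fin 3 → MvPolynomial (Fin 3) ℂ} {c : ℂ}
    (hv : ∀ i, ∑ j, v j * pderiv j (monomial (e i) (κ i)) = C c * monomial (e i) (κ i))
    (j : Fin 3) : v j = C (c * t j) * X j := by
  refine funext_set (fun _ => {0}ᶜ) (fun _ => (Set.finite_singleton 0).infinite_compl) fun z hz => ?_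
  have hz : ∀ i, z i ≠ 0 := fun i => hz i (Set.mem_univ i)
  have hy : (fun j => eval z (v j) / z j - c * t j) = 0 := by
    refine Matrix.eq_zero_of_mulVec_eq_zero hdet (funext fun i => ?_)
    have hm : eval z (monomial (e i) (κ i)) ≠ 0 := by
      rw [eval_monomial]
      exact mul_ne_zero (hκ i) (Finset.prod_ne_zero_iff.mpr fun l _ => pow_ne_zero _ (hz l))
    have h := congrArg (eval z) (hv i)
    simp only [map_sum, map_mul, eval_C] at h
    have h' : (∑ j, (e i j : ℂ) * (eval z (v j) / z j)) * eval z (monomial (e i) (κ i)) =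
        c * eval z (monomial (e i) (κ i)) := by
      rw [← h, Finset.sum_mul]
      refine Finset.sum_congr rfl fun j _ => ?_
      have := eval_pderiv_monomial (e i) (κ i) j z
      have hzj := hz j
      field_simp
      linear_combination -eval z (v j) * this
    have h'' := mul_right_cancel₀ hm h'
    change ∑ j, (e i j : ℂ) * (eval z (v j) / z j - c * t j) = 0
    have h3 : ∑ j, (e i j : ℂ) * (c * t j) = c := by
      simp_rw [mul_left_comm _ c]
      rw [← Finset.mul_sum, ht, mul_one]
    simp_rw [mul_sub]
    rw [Finset.sum_sub_distrib, h'', h3, sub_self]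
  have := congrFun hy j
  simp only [Pi.zero_apply, sub_eq_zero, div_eq_iff (hz j)] at this
  simpa using this

end Exponents

lemma real_equations {h k c B L : ℂ} {φ : ℝ}
    (hu : ∀ u : ℝ, ((h + k * (u + I * φ) + c * (u + I * φ) ^ 2) / (2 * I) -
      (B + (u + I * φ) * L)).re = 0) :
    conj c = c ∧ -(I / 2) * (k - conj k) = (L - c * φ) + conj (L - c * φ) ∧
      -(I / 2) * (h - conj h) + φ * (k + conj k) / 2 =
        B + conj B + I * φ * ((L - c * φ) - conj (L - c * φ)) := by
  have hI : ∀ x : ℂ, x / (2 * I) = -(I / 2) * x := fun x => by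
    field_simp
    linear_combination x * I_sq
  have e0 := hu 0
  have e1 := hu 1
  have e2 := hu (-1)
  simp only [hI, pow_two] at e0 e1 e2
  simp at e0 e1 e2
  have hc : c.im = 0 := by linarith
  simp only [hc] at e0 e1 e2
  refine ⟨Complex.conj_eq_iff_im.mpr hc, ?_, ?_⟩
  · apply Complex.ext <;> simp [hc]; linarith
  · apply Complex.ext <;> simp [hc]; linarith

section Model

variable {e : Fin 3 → (Fin 3 →₀ ℕ)} {κ : Fin 3 → ℂ} {σ : Equiv.Perm (Fin 3)}

/-- Solution of the graded system: the automorphisms whose components are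
`f + w l` and `h + w k + w² c`. -/
lemma components_of_equations (hdet : (expMatrix e).det ≠ 0) (hκ : ∀ i, κ i ≠ 0)
    (hσ : ∀ i, σ (σ i) = i)
    {t : Fin 3 → ℂ} (ht : ∀ i, ∑ j, (e i j : ℂ) * t j = 1)
    {f l : Fin 3 → MvPolynomial (Fin 3) ℂ} {h k : MvPolynomial (Fin 3) ℂ} {c : ℂ} {d : ℕ}
    (hd : ∀ i, (e i).degree ≤ d) (hf : ∀ j, (f j).IsHomogeneous (d + 1))
    (hl : ∀ j, constantCoeff (l j) = 0) (hh : constantCoeff h = 0) (hk : constantCoeff k = 0)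
    (H : ∀ (z : Fin 3 → ℂ) (u : ℝ),
      let m := fun i => eval z (monomial (e i) (κ i))
      let D := fun j => ∑ i, eval z (pderiv j (monomial (e i) (κ i))) * conj (m (σ i))
      let w := (u : ℂ) + I * ∑ i, m i * conj (m (σ i))
      ((eval z h + eval z k * w + c * w ^ 2) / (2 * I) -
        ∑ j, (eval z (f j) + eval z (l j) * w) * D j).re = 0) :
    conj c = c ∧ h = 0 ∧ k = 0 ∧ ∀ j, f j = 0 ∧ l j = C (c * t j) * X j := by
  set m : Fin 3 → MvPolynomial (Fin 3) ℂ := fun i => monomial (e i) (κ i) with hm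
  set a : Fin 3 → MvPolynomial (Fin 3) ℂ := fun i => ∑ j, l j * pderiv j (m i) - C c * m i with ha
  set b : Fin 3 → MvPolynomial (Fin 3) ℂ := fun i => ∑ j, f j * pderiv j (m i) with hb
  have he2 := exponents_add_ne hdet
  have hm0 : ∀ i, constantCoeff (m i) = 0 := fun i => by
    have : e i ≠ 0 := fun h0 => he2 i i i (by simp [h0])
    simp [hm, constantCoeff_eq, coeff_monomial, this]
  have ha0 : ∀ i, constantCoeff (a i) = 0 := fun i => by simp [ha, hl, hm0]
  have hbh : ∀ i, (b i).IsHomogeneous (d + 1 + ((e i).degree - 1)) := fun i =>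
    IsHomogeneous.sum _ _ _ fun j _ => (hf j).mul (isHomogeneous_monomial _ rfl).pderiv
  have hb0 : ∀ i, constantCoeff (b i) = 0 := fun i => by
    rw [constantCoeff_eq]
    exact (hbh i).coeff_eq_zero (by simp; omega)
  have hbe : ∀ i j, coeff (e j) (b i) = 0 := fun i j =>
    (hbh i).coeff_eq_zero (by have := hd j; omega)
  have hreal : ∀ z, ∃ φ : ℝ, ∑ i, eval z (m i) * conj (eval z (m (σ i))) = φ := fun z => by
    refine (Complex.conj_eq_iff_real).mp ?_
    rw [map_sum, ← Equiv.sum_comp σ]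
    simp [hσ, mul_comm]
  have hΛ : ∀ z, ∑ i, eval z (a i) * conj (eval z (m (σ i))) =
      ∑ i, (∑ j, eval z (l j) * eval z (pderiv j (m i))) * conj (eval z (m (σ i))) -
        c * ∑ i, eval z (m i) * conj (eval z (m (σ i))) := fun z => by
    simp [ha, sub_mul, Finset.sum_sub_distrib, Finset.mul_sum, mul_assoc]
  have hB : ∀ z, ∑ i, eval z (b i) * conj (eval z (m (σ i))) =
      ∑ i, (∑ j, eval z (f j) * eval z (pderiv j (m i))) * conj (eval z (m (σ i))) := fun z => by
    simp [hb]
  have key : ∀ z, conj c = c ∧ -(I / 2) * (eval z k - conj (eval z k)) =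
        ∑ i, eval z (a i) * conj (eval z (m (σ i))) +
          conj (∑ i, eval z (a i) * conj (eval z (m (σ i)))) ∧
      -(I / 2) * (eval z h - conj (eval z h)) +
        (∑ i, eval z (m i) * conj (eval z (m (σ i)))) * (eval z k + conj (eval z k)) / 2 =
        ∑ i, eval z (b i) * conj (eval z (m (σ i))) +
          conj (∑ i, eval z (b i) * conj (eval z (m (σ i)))) +
          I * (∑ i, eval z (m i) * conj (eval z (m (σ i)))) *
            (∑ i, eval z (a i) * conj (eval z (m (σ i))) -
              conj (∑ i, eval z (a i) * conj (eval z (m (σ i))))) := fun z => by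
    obtain ⟨φ, hφ⟩ := hreal z
    rw [hΛ, hφ]
    refine real_equations fun u => ?_
    have := H z u
    change ((eval z h + eval z k * (u + I * ∑ i, eval z (m i) * conj (eval z (m (σ i)))) +
      c * (u + I * ∑ i, eval z (m i) * conj (eval z (m (σ i)))) ^ 2) / (2 * I) -
      ∑ j, (eval z (f j) + eval z (l j) * (u + I * ∑ i, eval z (m i) * conj (eval z (m (σ i))))) *
        ∑ i, eval z (pderiv j (m i)) * conj (eval z (m (σ i)))).re = 0 at this
    rw [hφ] at this
    rw [← this, hB]
    congr 2
    simp only [Fin.sum_univ_three]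
    ring
  obtain ⟨rfl, hskew⟩ := polarized_first (σ := σ) hm0 ha0 hk fun z => by
    rw [(key z).2.1, map_sum, Finset.sum_add_distrib]
    simp
  have hskew' : ∀ z, conj (∑ i, eval z (a i) * conj (eval z (m (σ i)))) =
      -∑ i, eval z (a i) * conj (eval z (m (σ i))) := fun z => by
    have := (key z).2.1
    simp only [map_zero, sub_zero, mul_zero] at this
    linear_combination -this
  obtain ⟨rfl, h2⟩ := polarized_second (a := a) (σ := σ) hm0 hb0 hh fun z => by
    have := (key z).2.2
    rw [hskew'] at this
    simp only [map_zero, add_zero, mul_zero, zero_div] at this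
    rw [this, Finset.sum_add_distrib, map_sum]
    simp only [map_mul, Complex.conj_conj]
    ring
  obtain ⟨ha', hb'⟩ := components_eq_zero (fun _ => rfl) hκ (exponents_injective hdet) he2 hbe h2
  refine ⟨(key 0).1, rfl, rfl, fun j => ⟨?_, ?_⟩⟩
  · simpa using eq_diagonal (c := 0) hdet hκ ht (fun i => by rw [C_0, zero_mul]; exact hb' i) j
  · exact eq_diagonal hdet hκ ht (fun i => sub_eq_zero.mp (ha' i)) j

end Model

section Monomials

/-- The exponent vector of `mon c n` as a finitely supported function. -/
def expo (n : Fin 3 → ℕ) : Fin 3 →₀ ℕ := Finsupp.equivFunOnFinite.symm n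

lemma mon_eq_monomial (c : ℂ) (n : Fin 3 → ℕ) : mon c n = monomial (expo n) c := by
  rw [monomial_eq, Finsupp.prod_fintype _ _ (fun _ => pow_zero _), Fin.prod_univ_three, mon]
  simp [expo, mul_assoc]

lemma degree_expo (n : Fin 3 → ℕ) : (expo n).degree = degE n := by
  simp [Finsupp.degree_eq_sum, Fin.sum_univ_three, expo, degE]

variable (a b g : Fin 3 → ℕ)

lemma det_expMatrix : (expMatrix ![expo a, expo b, expo g]).det = edet a b g := by
  simp [expMatrix, edet, Matrix.det_fin_three, expo]
  ring

/-- Weights for which all three monomials have weight one. -/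
lemma exists_weights (hdet : edet a b g ≠ 0) :
    ∃ t : Fin 3 → ℝ, ∀ i, ∑ j, (![expo a, expo b, expo g] i j : ℂ) * (t j : ℂ) = 1 := by
  set A : Matrix (Fin 3) (Fin 3) ℝ := Matrix.of fun i j => (![expo a, expo b, expo g] i j : ℝ)
    with hA
  have hdetA : A.det = edet a b g := by
    simp [hA, edet, Matrix.det_fin_three, expo]
    ring
  have hu : IsUnit A.det := by
    rw [hdetA, isUnit_iff_ne_zero]
    exact_mod_cast hdet
  refine ⟨A⁻¹.mulVec 1, fun i => ?_⟩
  have h := congrFun (Matrix.mulVec_mulVec (1 : Fin 3 → ℝ) A A⁻¹) i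
  rw [Matrix.mul_nonsing_inv _ hu, Matrix.one_mulVec] at h
  have h' : ∑ j, (![expo a, expo b, expo g] i j : ℝ) * A⁻¹.mulVec 1 j = 1 := h
  exact_mod_cast h'

variable (cP cQ cR : ℂ) (z : Fin 3 → ℂ)

lemma Phi_mon : Phi (mon cP a) (mon cQ b) (mon cR g) z =
    ∑ i, eval z (monomial (![expo a, expo b, expo g] i) (![cP, cQ, cR] i)) *
      conj (eval z (monomial (![expo a, expo b, expo g] (Equiv.swap 0 1 i))
        (![cP, cQ, cR] (Equiv.swap 0 1 i)))) := by
  have h2 : Equiv.swap (0 : Fin 3) 1 2 = 2 := by decide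
  simp only [Phi, mon_eq_monomial, Fin.sum_univ_three, Equiv.swap_apply_left,
    Equiv.swap_apply_right, h2]
  rfl

lemma PhiD_mon (j : Fin 3) : PhiD (mon cP a) (mon cQ b) (mon cR g) j z =
    ∑ i, eval z (pderiv j (monomial (![expo a, expo b, expo g] i) (![cP, cQ, cR] i))) *
      conj (eval z (monomial (![expo a, expo b, expo g] (Equiv.swap 0 1 i))
        (![cP, cQ, cR] (Equiv.swap 0 1 i)))) := by
  have h2 : Equiv.swap (0 : Fin 3) 1 2 = 2 := by decide
  simp only [PhiD, mon_eq_monomial, Fin.sum_univ_three, Equiv.swap_apply_left,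
    Equiv.swap_apply_right, h2]
  rfl

variable {a b g}

lemma sum_weights_PhiD {t : Fin 3 → ℝ}
    (ht : ∀ i, ∑ j, (![expo a, expo b, expo g] i j : ℂ) * (t j : ℂ) = 1) :
    ∑ j, t j * z j * PhiD (mon cP a) (mon cQ b) (mon cR g) j z =
      Phi (mon cP a) (mon cQ b) (mon cR g) z := by
  simp only [PhiD_mon, Phi_mon, Finset.mul_sum]
  rw [Finset.sum_comm]
  refine Finset.sum_congr rfl fun i _ => ?_
  conv_rhs => rw [← one_mul (eval z _), ← ht i, Finset.sum_mul, Finset.sum_mul]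
  refine Finset.sum_congr rfl fun j _ => ?_
  have := eval_pderiv_monomial (![expo a, expo b, expo g] i) (![cP, cQ, cR] i) j z
  rw [← mul_assoc]
  congr 1
  linear_combination (t j : ℂ) * this

end Monomials

/-- The vector field `Σ t_j z_j w ∂/∂z_j + w² ∂/∂w`. -/
def quadraticField (t : Fin 3 → ℝ) :
    (Fin 3 → MvPolynomial (Fin 4) ℂ) × MvPolynomial (Fin 4) ℂ :=
  (fun j => rename Fin.castSucc (C (t j : ℂ) * X j) * X 3, X 3 ^ 2)

lemma quadraticField_ne_zero (t : Fin 3 → ℝ) : quadraticField t ≠ 0 := fun h =>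
  pow_ne_zero 2 (X_ne_zero (R := ℂ) (3 : Fin 4)) (congrArg Prod.snd h)

lemma quadraticField_mem {a b g : Fin 3 → ℕ} (cP cQ cR : ℂ) {t : Fin 3 → ℝ} {d : ℕ}
    (ht : ∀ i, ∑ j, (![expo a, expo b, expo g] i j : ℂ) * (t j : ℂ) = 1) :
    quadraticField t ∈ gw (mon cP a) (mon cQ b) (mon cR g) d 1 := by
  refine ⟨fun z u => ?_, fun j n hn => ?_, fun n hn => ?_⟩
  · set Φ := Phi (mon cP a) (mon cQ b) (mon cR g) z with hΦ
    have hsum := sum_weights_PhiD cP cQ cR z ht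
    have hreal : conj Φ = Φ := by
      simp only [hΦ, Phi, map_add, map_mul, Complex.conj_conj]
      ring
    obtain ⟨φ, hφ⟩ := Complex.conj_eq_iff_real.mp hreal
    have hF : ∑ j, eval (Fin.snoc z (u + I * Φ)) ((quadraticField t).1 j) *
        PhiD (mon cP a) (mon cQ b) (mon cR g) j z = (u + I * Φ) * Φ := by
      rw [show (u + I * Φ) * Φ = (u + I * Φ) * _ from congrArg _ hsum.symm, Finset.mul_sum]
      refine Finset.sum_congr rfl fun j _ => ?_
      simp only [quadraticField, map_mul (eval _), eval_snoc_rename, eval_snoc_X]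
      simp only [eval_C, eval_X]
      ring
    rw [hF]
    simp only [quadraticField, map_pow, eval_snoc_X, hφ]
    have : ((u + I * φ : ℂ) ^ 2 / (2 * I) - (u + I * φ) * φ) =
        (-(u ^ 2 + φ ^ 2) / 2 : ℝ) * I := by
      push_cast
      field_simp
      linear_combination (u ^ 2 : ℂ) * I_sq
    rw [this, Complex.re_ofReal_mul, I_re, mul_zero]
  · have hmon : (quadraticField t).1 j =
        monomial (Finsupp.single j.castSucc 1 + Finsupp.single 3 1) (t j : ℂ) := by
      simp only [quadraticField]
      rw [C_mul_X_eq_monomial, rename_monomial, Finsupp.mapDomain_single, X,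
        monomial_mul, mul_one]
    rw [hmon] at hn
    rw [Finset.mem_singleton.mp (support_monomial_subset hn)]
    fin_cases j <;> simp
  · rw [quadraticField, X_pow_eq_monomial] at hn
    rw [Finset.mem_singleton.mp (support_monomial_subset hn)]
    norm_num [Finsupp.single_apply]

lemma eq_smul_quadraticField {a b g : Fin 3 → ℕ} {cP cQ cR : ℂ}
    (hcP : cP ≠ 0) (hcQ : cQ ≠ 0) (hcR : cR ≠ 0) (hdeg : degE a + degE b = 2 * degE g)
    (hdegR : 2 ≤ degE g) (hdet : edet a b g ≠ 0) {t : Fin 3 → ℝ}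
    (ht : ∀ i, ∑ j, (![expo a, expo b, expo g] i j : ℂ) * (t j : ℂ) = 1)
    {Y : (Fin 3 → MvPolynomial (Fin 4) ℂ) × MvPolynomial (Fin 4) ℂ}
    (hY : Y ∈ gw (mon cP a) (mon cQ b) (mon cR g) (degE a + degE b) 1) :
    ∃ s : ℝ, s • quadraticField t = Y := by
  obtain ⟨hCR, hF, hG⟩ := hY
  set d := degE a + degE b with hd
  have hd4 : 4 ≤ d := by omega
  have hd0 : (d : ℚ) ≠ 0 := by positivity
  choose q hq hq0 hFq using fun j => exists_decomposition (d := d) (N := d + 1) (by omega) (Y.1 j)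
    fun n hn => by
      have := hF j n hn
      field_simp at this
      exact_mod_cast (by linarith : (n 0 + n 1 + n 2 + d * n 3 : ℚ) = d + 1)
  obtain ⟨p, hp, -, hGp⟩ := exists_decomposition (d := d) (N := 2 * d) (by omega) Y.2
    fun n hn => by
      have := hG n hn
      field_simp at this
      exact_mod_cast (by linarith : (n 0 + n 1 + n 2 + d * n 3 : ℚ) = 2 * d)
  have hq2 : ∀ j, q j 2 = 0 := fun j => hq0 j 2 (by simp; omega)
  obtain ⟨c, hc⟩ : ∃ c, p 2 = C c := ⟨_, totalDegree_eq_zero_iff_eq_C.mp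
    ((totalDegree_zero_iff_isHomogeneous _).mpr (hp 2 0 (by simp; omega)))⟩
  simp only [Fin.sum_univ_three, hq2, hc, map_zero, zero_mul, add_zero, Fin.val_zero, Fin.val_one,
    Fin.val_two, pow_zero, pow_one, mul_one] at hFq hGp
  have hconst : ∀ {r : MvPolynomial (Fin 3) ℂ} {n : ℕ}, r.IsHomogeneous n → n ≠ 0 →
      constantCoeff r = 0 := fun hr hn => by
    rw [constantCoeff_eq]
    exact hr.coeff_eq_zero (by simpa using hn.symm)
  obtain ⟨hcc, hh, hk, hfl⟩ := components_of_equations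
    (e := ![expo a, expo b, expo g]) (κ := ![cP, cQ, cR]) (σ := Equiv.swap 0 1)
    (f := fun j => q j 0) (l := fun j => q j 1) (h := p 0) (k := p 1) (c := c) (d := d)
    (by rw [det_expMatrix]; exact_mod_cast hdet)
    (by intro i; fin_cases i <;> simp [hcP, hcQ, hcR]) (by decide) ht
    (by intro i; fin_cases i <;> simp [degree_expo] <;> omega)
    (fun j => hq j 0 _ (by simp)) (fun j => hconst (hq j 1 1 (by simp; omega)) one_ne_zero)
    (hconst (hp 0 (2 * d) (by simp)) (by omega)) (hconst (hp 1 d (by simp; omega)) (by omega))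
    (fun z u => by
      have := hCR z u
      simpa only [hFq, hGp, PhiD_mon, Phi_mon, map_add (eval _), map_mul (eval _), map_pow (eval _),
        eval_snoc_rename, eval_snoc_X, eval_C] using this)
  obtain ⟨s, rfl⟩ := Complex.conj_eq_iff_real.mp hcc
  refine ⟨s, Prod.ext (funext fun j => ?_) ?_⟩
  · rw [hFq, (hfl j).1, (hfl j).2, Prod.smul_fst, Pi.smul_apply, quadraticField, map_zero, zero_add,
      C_mul, mul_assoc, map_mul (rename _), rename_C, mul_assoc, C_mul', ← algebraMap_smul ℂ s]
    rfl
  · rw [hGp, hh, hk, Prod.smul_snd, quadraticField, map_zero, zero_mul, zero_add, zero_add,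
      rename_C, C_mul', ← algebraMap_smul ℂ s]
    rfl

/-- For a holomorphically nondegenerate monomial model with
`deg R ≥ 2`, the graded component `g₁` has real dimension exactly `1`. -/
theorem stmt15 (cP cQ cR : ℂ) (hcP : cP ≠ 0) (hcQ : cQ ≠ 0) (hcR : cR ≠ 0)
    (a b g : Fin 3 → ℕ)
    (hdeg : degE a + degE b = 2 * degE g)
    (hdegR : 2 ≤ degE g)
    (hdet : edet a b g ≠ 0) :
    Module.rank ℝ ↥(Submodule.span ℝ (gw (mon cP a) (mon cQ b) (mon cR g)
        (degE a + degE b) 1)) = 1 := by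
  obtain ⟨t, ht⟩ := exists_weights a b g hdet
  refine (rank_submodule_eq_one_iff _).mpr ⟨quadraticField t,
    Submodule.subset_span (quadraticField_mem cP cQ cR ht), quadraticField_ne_zero t,
    Submodule.span_le.mpr fun Y hY => ?_⟩
  exact Submodule.mem_span_singleton.mpr
    (eq_smul_quadraticField hcP hcQ hcR hdeg hdegR hdet ht hY)
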